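/- Fix γ ∈ (0,1) and let φ_γ(x) = (1−γ)^{−2} · ∫_{{(y,z)∈[0,1]²: |y−z|≥γ}} f_{(y,z)}(x) d(y,z). Then for every x ∈ [0,1/2]: (1) if x ≥ γ then φ_γ(x) = −(8/(1−γ)²)·[(1−x)·ln(1−x) + x·(1−ln 2) + γ/4]; (2) if x ≥ 1−γ and x ≤ γ/2 then φ_γ(x) = −(8/(1−γ)²)·[(1−x)·ln γ + x + (1−2x)/(2γ) − γ/2]; (3) if x ≥ 1−γ and x ≥ γ/2 then φ_γ(x) = −(8/(1−γ)²)·[−x·ln(2x) + ln γ + x + ((1−x)² + x²)/(2γ) − (3/4)γ]; (4) if x ≤ γ, x ≤ 1−γ and x ≤ γ/2 then φ_γ(x) = −(8/(1−γ)²)·[(1−x)·ln(1−x) + x − x²/(2γ)]; (5) if x ≤ γ, x ≤ 1−γ and x ≥ γ/2 then φ_γ(x) = −(8/(1−γ)²)·[(1−x)·ln(1−x) − x·ln(2x/γ) + x + x²/(2γ) − γ/4]. -/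

import Mathlib

open MeasureTheory Real

/-- The symmetric triangular density on `[0,1]` with support endpoints `y` and `z`. -/
noncomputable def triDens (y z x : ℝ) : ℝ :=
  (2 / |y - z|) * max 0 (1 - (2 / |y - z|) * |x - (y + z) / 2|)

/-- The region of admissible endpoint pairs for the restricted triangular
distributions: pairs `(y,z) ∈ [0,1]²` with `|y−z| ≥ γ`. -/
def restrictedRegion (γ : ℝ) : Set (ℝ × ℝ) :=
  {p : ℝ × ℝ | p.1 ∈ Set.Icc (0 : ℝ) 1 ∧ p.2 ∈ Set.Icc (0 : ℝ) 1 ∧ γ ≤ |p.1 - p.2|}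

/-- The density `φ_γ` of the intensity measure of a random restricted symmetric
triangular distribution with parameter `γ`. -/
noncomputable def phiGamma (γ x : ℝ) : ℝ :=
  ((1 - γ) ^ 2)⁻¹ * ∫ p in restrictedRegion γ, triDens p.1 p.2 x

/-!
For endpoints `y` and `y + w`, the tent `triDens y (y + w)` is `4 / w ^ 2` times the second
difference, with step `w / 2`, of the positive part. Parametrising the region by the width `w` and
the left endpoint `y`, the integral over `y ∈ [0, 1 - w]` is a combination of the squares of `x`,
`1 - x - w`, `(2 * x - w)⁺`, `(x - w)⁺` and `(1 - x - w)⁺`, divided by `w ^ 2`. Integrating these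
over `w ∈ [γ, 1]` gives the logarithms; the regimes record on which side of `γ` the thresholds
`2 * x`, `x` and `1 - x` lie.
-/

section Shear

theorem integral_prod_eq_integral_integral_add {G E : Type*} [AddGroup G] [MeasurableSpace G]
    [MeasurableAdd₂ G] [MeasurableNeg G] [NormedAddCommGroup E] [NormedSpace ℝ E]
    {μ ν : Measure G} [SFinite μ] [SFinite ν] [ν.IsAddLeftInvariant] {f : G × G → E}
    (hf : Integrable f (μ.prod ν)) :
    ∫ p, f p ∂μ.prod ν = ∫ w, ∫ y, f (y, y + w) ∂μ ∂ν := by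
  have shear := measurePreserving_prod_add μ ν
  have shear_emb := (MeasurableEquiv.shearAddRight G).measurableEmbedding
  rw [← shear.integral_comp shear_emb]
  exact integral_prod_symm _ ((shear.integrable_comp_emb shear_emb).2 hf)

theorem integral_prod_eq_two_mul_integral_Ioi_of_symm {f : ℝ × ℝ → ℝ} (hf : Integrable f)
    (hsymm : ∀ p : ℝ × ℝ, f p.swap = f p) :
    ∫ p, f p = 2 * ∫ w in Set.Ioi 0, ∫ y, f (y, y + w) := by
  have slice_neg (w : ℝ) : ∫ y, f (y, y + -w) = ∫ y, f (y, y + w) := by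
    rw [← integral_add_right_eq_self _ w]
    simp only [add_neg_cancel_right]
    exact integral_congr_ae (.of_forall fun y ↦ hsymm (y, y + w))
  have slice_abs (w : ℝ) : ∫ y, f (y, y + |w|) = ∫ y, f (y, y + w) := by
    rcases abs_choice w with h | h <;> rw [h]
    exact slice_neg w
  rw [← integral_comp_abs (f := fun w ↦ ∫ y, f (y, y + w))]
  simp only [slice_abs]
  exact integral_prod_eq_integral_integral_add hf

end Shear

section RestrictedRegion

theorem measurableSet_restrictedRegion (γ : ℝ) : MeasurableSet (restrictedRegion γ) :=
  (measurableSet_Icc.preimage measurable_fst).inter <|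
    (measurableSet_Icc.preimage measurable_snd).inter <|
      measurableSet_le measurable_const (measurable_fst.sub measurable_snd).norm

theorem volume_restrictedRegion_lt_top (γ : ℝ) : volume (restrictedRegion γ) < ⊤ :=
  (isCompact_Icc.prod isCompact_Icc).measure_lt_top.trans_le' <|
    measure_mono fun _ hp ↦ ⟨hp.1, hp.2.1⟩

theorem swap_mem_restrictedRegion {γ : ℝ} {p : ℝ × ℝ} :
    p.swap ∈ restrictedRegion γ ↔ p ∈ restrictedRegion γ := by
  simp only [restrictedRegion, Set.mem_ofPred_eq, Prod.fst_swap, Prod.snd_swap,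
    abs_sub_comm p.2 p.1]
  tauto

theorem mk_add_mem_restrictedRegion {γ y w : ℝ} (hw : 0 < w) :
    (y, y + w) ∈ restrictedRegion γ ↔ γ ≤ w ∧ y ∈ Set.Icc 0 (1 - w) := by
  simp only [restrictedRegion, Set.mem_ofPred_eq, Set.mem_Icc, sub_add_cancel_left, abs_neg,
    abs_of_pos hw]
  grind

theorem integral_indicator_restrictedRegion_mk_add {E : Type*} [NormedAddCommGroup E]
    [NormedSpace ℝ E] {γ w : ℝ} (hw : 0 < w) (f : ℝ × ℝ → E) :
    ∫ y, (restrictedRegion γ).indicator f (y, y + w) =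
      (Set.Icc γ 1).indicator (fun w ↦ ∫ y in 0..1 - w, f (y, y + w)) w := by
  by_cases hwγ : w ∈ Set.Icc γ 1
  · have slice : (fun y ↦ (restrictedRegion γ).indicator f (y, y + w)) =
        (Set.Icc 0 (1 - w)).indicator fun y ↦ f (y, y + w) := by
      ext y
      simp only [Set.indicator, mk_add_mem_restrictedRegion hw, hwγ.1, true_and]
    rw [Set.indicator_of_mem hwγ, slice, integral_indicator measurableSet_Icc,
      integral_Icc_eq_integral_Ioc, intervalIntegral.integral_of_le (sub_nonneg.2 hwγ.2)]
  · have slice (y : ℝ) : (restrictedRegion γ).indicator f (y, y + w) = 0 := by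
      refine Set.indicator_of_notMem (fun hy ↦ hwγ ?_) f
      obtain ⟨hγw, hy0, hyw⟩ := (mk_add_mem_restrictedRegion hw).1 hy
      exact ⟨hγw, by linarith⟩
    simp only [slice, integral_zero, Set.indicator_of_notMem hwγ]

theorem setIntegral_restrictedRegion_of_symm {γ : ℝ} (hγ₀ : 0 < γ) (hγ₁ : γ ≤ 1) {f : ℝ × ℝ → ℝ}
    (hf : IntegrableOn f (restrictedRegion γ)) (hsymm : ∀ p : ℝ × ℝ, f p.swap = f p) :
    ∫ p in restrictedRegion γ, f p = 2 * ∫ w in γ..1, ∫ y in 0..1 - w, f (y, y + w) := by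
  have indicator_symm (p : ℝ × ℝ) :
      (restrictedRegion γ).indicator f p.swap = (restrictedRegion γ).indicator f p := by
    by_cases hp : p ∈ restrictedRegion γ
    · rw [Set.indicator_of_mem hp, Set.indicator_of_mem (swap_mem_restrictedRegion.2 hp), hsymm]
    · rw [Set.indicator_of_notMem hp, Set.indicator_of_notMem (mt swap_mem_restrictedRegion.1 hp)]
  have Icc_subset : Set.Icc γ 1 ⊆ Set.Ioi 0 := fun w hw ↦ hγ₀.trans_le hw.1
  rw [← integral_indicator (measurableSet_restrictedRegion γ),
    integral_prod_eq_two_mul_integral_Ioi_of_symm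
      (hf.integrable_indicator (measurableSet_restrictedRegion γ)) indicator_symm,
    setIntegral_congr_fun measurableSet_Ioi
      fun w hw ↦ integral_indicator_restrictedRegion_mk_add hw f,
    setIntegral_indicator measurableSet_Icc, Set.inter_eq_right.2 Icc_subset,
    integral_Icc_eq_integral_Ioc, intervalIntegral.integral_of_le hγ₁]

end RestrictedRegion

section PosPart

variable {R : Type*} [CommRing R] [LinearOrder R] [IsStrictOrderedRing R]

theorem posPart_mul_of_nonneg_left {c : R} (hc : 0 ≤ c) (t : R) : (c * t)⁺ = c * t⁺ := by
  rw [posPart_def, posPart_def, mul_max_of_nonneg _ _ hc, mul_zero]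

theorem posPart_sub_abs {h : R} (hh : 0 ≤ h) (t : R) :
    (h - |t|)⁺ = (t + h)⁺ - 2 * t⁺ + (t - h)⁺ := by
  simp only [posPart_def]
  grind

theorem posPart_sub_sq_add_posPart_sub_sq (s t : R) :
    (s - t)⁺ ^ 2 + (t - s)⁺ ^ 2 = (s - t) ^ 2 := by
  simp only [posPart_def]
  grind

end PosPart

section PosPartIntegrals

theorem continuous_posPart_sub_left (s : ℝ) : Continuous fun t ↦ (s - t)⁺ :=
  continuous_posPart.comp (continuous_const.sub continuous_id)

theorem integral_posPart (a b : ℝ) : ∫ u in a..b, u⁺ = (b⁺ ^ 2 - a⁺ ^ 2) / 2 := by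
  have hderiv (u : ℝ) : HasDerivWithinAt (fun v ↦ v⁺ ^ 2 / 2) u⁺ (Set.Ioi u) u := by
    rcases lt_or_ge u 0 with hu | hu
    · rw [posPart_of_nonpos hu.le]
      refine ((hasDerivAt_const u (0 : ℝ)).congr_of_eventuallyEq ?_).hasDerivWithinAt
      filter_upwards [eventually_lt_nhds hu] with v hv
      simp [posPart_of_nonpos hv.le]
    · have hsq : HasDerivAt (fun v : ℝ ↦ v ^ 2 / 2) u u := by
        simpa using (hasDerivAt_pow 2 u).div_const 2
      rw [posPart_of_nonneg hu]
      refine hsq.hasDerivWithinAt.congr (fun v hv ↦ ?_) (by rw [posPart_of_nonneg hu])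
      rw [posPart_of_nonneg (hu.trans (le_of_lt hv))]
  have hcont : Continuous fun v : ℝ ↦ v⁺ ^ 2 / 2 := (continuous_posPart.pow 2).div_const 2
  rw [intervalIntegral.integral_eq_sub_of_hasDeriv_right hcont.continuousOn (fun u _ ↦ hderiv u)
    (continuous_posPart.intervalIntegrable a b), sub_div]

theorem integral_posPart_sub_left (s a b : ℝ) :
    ∫ y in a..b, (s - y)⁺ = ((s - a)⁺ ^ 2 - (s - b)⁺ ^ 2) / 2 := by
  rw [intervalIntegral.integral_comp_sub_left (fun u : ℝ ↦ u⁺) s, integral_posPart]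

theorem intervalIntegrable_div_sq {g : ℝ → ℝ} (hg : Continuous g) {a b : ℝ}
    (ha : 0 < a) (hb : 0 < b) : IntervalIntegrable (fun w ↦ g w / w ^ 2) volume a b := by
  refine (hg.continuousOn.div (continuousOn_pow 2) fun w hw ↦ ?_).intervalIntegrable
  exact pow_ne_zero 2 ((lt_min ha hb).trans_le hw.1).ne'

variable {s a b : ℝ}

theorem integral_const_div_sq (c : ℝ) (ha : 0 < a) (hb : 0 < b) :
    ∫ w in a..b, c / w ^ 2 = c * (1 / a - 1 / b) := by
  have hpow : ∫ w in a..b, w ^ (-2 : ℤ) = (b ^ (-2 + 1 : ℤ) - a ^ (-2 + 1 : ℤ)) / ((-2 : ℤ) + 1) :=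
    integral_zpow (.inr ⟨by norm_num, Set.notMem_uIcc_of_lt ha hb⟩)
  calc ∫ w in a..b, c / w ^ 2 = c * ∫ w in a..b, w ^ (-2 : ℤ) := by
        rw [← intervalIntegral.integral_const_mul]; rfl
    _ = c * (1 / a - 1 / b) := by rw [hpow]; norm_num; left; ring

theorem integral_sq_sub_div_sq (s : ℝ) (ha : 0 < a) (hb : 0 < b) :
    ∫ w in a..b, (s - w) ^ 2 / w ^ 2 =
      b - a - 2 * s * (log b - log a) + s ^ 2 * (1 / a - 1 / b) := by
  have hderiv (w : ℝ) (hw : w ∈ Set.uIcc a b) :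
      HasDerivAt (fun w ↦ w - 2 * s * log w - s ^ 2 * w⁻¹) ((s - w) ^ 2 / w ^ 2) w := by
    have hw₀ : w ≠ 0 := ((lt_min ha hb).trans_le hw.1).ne'
    refine (((hasDerivAt_id w).sub ((hasDerivAt_log hw₀).const_mul (2 * s))).sub
      ((hasDerivAt_inv hw₀).const_mul (s ^ 2))).congr_deriv ?_
    field_simp
    ring
  rw [intervalIntegral.integral_eq_sub_of_hasDerivAt hderiv
    (intervalIntegrable_div_sq (by fun_prop) ha hb)]
  ring

theorem integral_sq_posPart_sub_div_sq_eq_zero (hsa : s ≤ a) (hsb : s ≤ b) :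
    ∫ w in a..b, (s - w)⁺ ^ 2 / w ^ 2 = 0 := by
  rw [← intervalIntegral.integral_zero (μ := volume) (a := a) (b := b)]
  refine intervalIntegral.integral_congr fun w hw ↦ ?_
  have hsw : s - w ≤ 0 := sub_nonpos.2 ((le_min hsa hsb).trans hw.1)
  simp [posPart_of_nonpos hsw]

theorem integral_sq_posPart_sub_div_sq (ha : 0 < a) (has : a ≤ s) (hsb : s ≤ b) :
    ∫ w in a..b, (s - w)⁺ ^ 2 / w ^ 2 = s ^ 2 / a - a - 2 * s * (log s - log a) := by
  have hs : 0 < s := ha.trans_le has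
  have hcont : Continuous fun w : ℝ ↦ (s - w)⁺ ^ 2 :=
    (continuous_posPart_sub_left s).pow 2
  have below : ∫ w in a..s, (s - w)⁺ ^ 2 / w ^ 2 = ∫ w in a..s, (s - w) ^ 2 / w ^ 2 := by
    refine intervalIntegral.integral_congr fun w hw ↦ ?_
    rw [Set.uIcc_of_le has] at hw
    simp only [posPart_of_nonneg (sub_nonneg.2 hw.2)]
  rw [← intervalIntegral.integral_add_adjacent_intervals (intervalIntegrable_div_sq hcont ha hs)
      (intervalIntegrable_div_sq hcont hs (hs.trans_le hsb)),
    below, integral_sq_sub_div_sq s ha hs, integral_sq_posPart_sub_div_sq_eq_zero le_rfl hsb]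
  field_simp
  ring

end PosPartIntegrals

section TriDens

theorem triDens_comm (y z x : ℝ) : triDens y z x = triDens z y x := by
  rw [triDens, triDens, abs_sub_comm, add_comm]

theorem triDens_nonneg (y z x : ℝ) : 0 ≤ triDens y z x := by
  unfold triDens
  positivity

theorem triDens_le_two_div_abs_sub (y z x : ℝ) : triDens y z x ≤ 2 / |y - z| := by
  refine mul_le_of_le_one_right (by positivity) (max_le zero_le_one (sub_le_self 1 ?_))
  positivity

theorem integrableOn_triDens_restrictedRegion {γ : ℝ} (hγ : 0 < γ) (x : ℝ) :
    IntegrableOn (fun p : ℝ × ℝ ↦ triDens p.1 p.2 x) (restrictedRegion γ) := by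
  have hmeas : Measurable fun p : ℝ × ℝ ↦ triDens p.1 p.2 x := by
    unfold triDens
    fun_prop
  refine Measure.integrableOn_of_bounded (M := 2 / γ) (volume_restrictedRegion_lt_top γ).ne
    hmeas.aestronglyMeasurable ?_
  refine ae_restrict_of_forall_mem (measurableSet_restrictedRegion γ) fun p hp ↦ ?_
  rw [norm_of_nonneg (triDens_nonneg p.1 p.2 x)]
  calc triDens p.1 p.2 x ≤ 2 / |p.1 - p.2| := triDens_le_two_div_abs_sub p.1 p.2 x
    _ ≤ 2 / γ := div_le_div_of_nonneg_left zero_le_two hγ hp.2.2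

theorem triDens_add_eq_posPart {w : ℝ} (hw : 0 < w) (y x : ℝ) :
    triDens y (y + w) x =
      4 / w ^ 2 * ((x - y)⁺ - 2 * (x - w / 2 - y)⁺ + (x - w - y)⁺) := by
  have hscale : w / 2 * (1 - 2 / w * |x - (y + (y + w)) / 2|) = w / 2 - |x - w / 2 - y| := by
    rw [show x - (y + (y + w)) / 2 = x - w / 2 - y by ring]
    field_simp
  calc triDens y (y + w) x = 2 / w * (1 - 2 / w * |x - (y + (y + w)) / 2|)⁺ := by
        rw [triDens, sub_add_cancel_left, abs_neg, abs_of_pos hw, max_comm, posPart_def]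
    _ = 4 / w ^ 2 * (w / 2 * (1 - 2 / w * |x - (y + (y + w)) / 2|)⁺) := by field_simp; ring
    _ = 4 / w ^ 2 * (w / 2 - |x - w / 2 - y|)⁺ := by
        rw [← hscale, posPart_mul_of_nonneg_left (by positivity)]
    _ = _ := by
        rw [posPart_sub_abs (by positivity)]
        ring_nf

theorem integral_triDens_add {w : ℝ} (hw : 0 < w) (a b x : ℝ) :
    ∫ y in a..b, triDens y (y + w) x =
      2 / w ^ 2 * ((x - a)⁺ ^ 2 - (x - b)⁺ ^ 2
        - 2 * ((x - w / 2 - a)⁺ ^ 2 - (x - w / 2 - b)⁺ ^ 2)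
        + ((x - w - a)⁺ ^ 2 - (x - w - b)⁺ ^ 2)) := by
  have hint (s : ℝ) : IntervalIntegrable (fun y ↦ (s - y)⁺) volume a b :=
    (continuous_posPart_sub_left s).intervalIntegrable a b
  simp only [triDens_add_eq_posPart hw]
  rw [intervalIntegral.integral_const_mul,
    intervalIntegral.integral_add ((hint _).sub ((hint _).const_mul 2)) (hint _),
    intervalIntegral.integral_sub (hint _) ((hint _).const_mul 2),
    intervalIntegral.integral_const_mul, integral_posPart_sub_left, integral_posPart_sub_left,
    integral_posPart_sub_left]
  ring

theorem integral_triDens_add_zero_one_sub {w x : ℝ} (hw : 0 < w) (hx : 0 ≤ x)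
    (hxw : x + w / 2 ≤ 1) :
    ∫ y in 0..1 - w, triDens y (y + w) x =
      2 * x ^ 2 / w ^ 2 - 2 * ((1 - x - w) ^ 2 / w ^ 2) - (2 * x - w)⁺ ^ 2 / w ^ 2
        + 2 * ((x - w)⁺ ^ 2 / w ^ 2) + 2 * ((1 - x - w)⁺ ^ 2 / w ^ 2) := by
  have hdouble : (2 * x - w)⁺ = 2 * (x - w / 2)⁺ := by
    rw [← posPart_mul_of_nonneg_left zero_le_two]
    ring_nf
  rw [integral_triDens_add hw, ← posPart_sub_sq_add_posPart_sub_sq (1 - x) w, hdouble,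
    show x - (1 - w) = w - (1 - x) by ring, sub_zero, sub_zero, sub_zero, posPart_of_nonneg hx,
    posPart_of_nonpos (by linarith : x - w / 2 - (1 - w) ≤ 0),
    posPart_of_nonpos (by linarith : x - w - (1 - w) ≤ 0)]
  ring

theorem setIntegral_triDens_restrictedRegion {γ x : ℝ} (hγ₀ : 0 < γ) (hγ₁ : γ ≤ 1)
    (hx : x ∈ Set.Icc (0 : ℝ) (1 / 2)) :
    ∫ p in restrictedRegion γ, triDens p.1 p.2 x =
      2 * ∫ w in γ..1, (2 * x ^ 2 / w ^ 2 - 2 * ((1 - x - w) ^ 2 / w ^ 2)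
        - (2 * x - w)⁺ ^ 2 / w ^ 2 + 2 * ((x - w)⁺ ^ 2 / w ^ 2)
        + 2 * ((1 - x - w)⁺ ^ 2 / w ^ 2)) := by
  rw [setIntegral_restrictedRegion_of_symm hγ₀ hγ₁ (integrableOn_triDens_restrictedRegion hγ₀ x)
    fun p ↦ triDens_comm p.2 p.1 x]
  refine congrArg (2 * ·) (intervalIntegral.integral_congr fun w hw ↦ ?_)
  rw [Set.uIcc_of_le hγ₁] at hw
  exact integral_triDens_add_zero_one_sub (hγ₀.trans_le hw.1) hx.1 (by linarith [hw.2, hx.2])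

end TriDens

theorem phiGamma_eq_integral_posPart {γ x : ℝ} (hγ : γ ∈ Set.Ioo (0 : ℝ) 1)
    (hx : x ∈ Set.Icc (0 : ℝ) (1 / 2)) :
    phiGamma γ x = -(8 / (1 - γ) ^ 2) *
      ((1 - x) * log γ + (1 - γ) / 2 + (1 - 2 * x) * (1 / γ - 1) / 2
        + (∫ w in γ..1, (2 * x - w)⁺ ^ 2 / w ^ 2) / 4
        - (∫ w in γ..1, (x - w)⁺ ^ 2 / w ^ 2) / 2
        - (∫ w in γ..1, (1 - x - w)⁺ ^ 2 / w ^ 2) / 2) := by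
  obtain ⟨hγ₀, hγ₁⟩ := hγ
  have hconst : IntervalIntegrable (fun w ↦ 2 * x ^ 2 / w ^ 2) volume γ 1 :=
    intervalIntegrable_div_sq continuous_const hγ₀ one_pos
  have hsq : IntervalIntegrable (fun w ↦ 2 * ((1 - x - w) ^ 2 / w ^ 2)) volume γ 1 :=
    (intervalIntegrable_div_sq (by fun_prop) hγ₀ one_pos).const_mul 2
  have hpos (s : ℝ) : IntervalIntegrable (fun w ↦ (s - w)⁺ ^ 2 / w ^ 2) volume γ 1 :=
    intervalIntegrable_div_sq ((continuous_posPart_sub_left s).pow 2) hγ₀ one_pos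
  have hpos₂ (s : ℝ) := (hpos s).const_mul 2
  rw [phiGamma, setIntegral_triDens_restrictedRegion hγ₀ hγ₁.le hx,
    intervalIntegral.integral_add (((hconst.sub hsq).sub (hpos _)).add (hpos₂ _)) (hpos₂ _),
    intervalIntegral.integral_add ((hconst.sub hsq).sub (hpos _)) (hpos₂ _),
    intervalIntegral.integral_sub (hconst.sub hsq) (hpos _),
    intervalIntegral.integral_sub hconst hsq, intervalIntegral.integral_const_mul,
    intervalIntegral.integral_const_mul, intervalIntegral.integral_const_mul,
    integral_const_div_sq _ hγ₀ one_pos, integral_sq_sub_div_sq _ hγ₀ one_pos, log_one]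
  ring

/-- Explicit formulas for the restricted intensity density `φ_γ` on `[0, 1/2]`,
in the five regimes determined by the relative position of `x` with respect to
`γ`, `1−γ` and `γ/2`. -/
theorem phiGamma_formulas (γ : ℝ) (hγ : γ ∈ Set.Ioo (0 : ℝ) 1)
    (x : ℝ) (hx : x ∈ Set.Icc (0 : ℝ) (1 / 2)) :
    (γ ≤ x →
      phiGamma γ x = -(8 / (1 - γ) ^ 2) *
        ((1 - x) * Real.log (1 - x) + x * (1 - Real.log 2) + γ / 4))
    ∧ (1 - γ ≤ x → x ≤ γ / 2 →
      phiGamma γ x = -(8 / (1 - γ) ^ 2) *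
        ((1 - x) * Real.log γ + x + (1 - 2 * x) / (2 * γ) - γ / 2))
    ∧ (1 - γ ≤ x → γ / 2 ≤ x →
      phiGamma γ x = -(8 / (1 - γ) ^ 2) *
        (-(x * Real.log (2 * x)) + Real.log γ + x
          + ((1 - x) ^ 2 + x ^ 2) / (2 * γ) - (3 / 4) * γ))
    ∧ (x ≤ γ → x ≤ 1 - γ → x ≤ γ / 2 →
      phiGamma γ x = -(8 / (1 - γ) ^ 2) *
        ((1 - x) * Real.log (1 - x) + x - x ^ 2 / (2 * γ)))
    ∧ (x ≤ γ → x ≤ 1 - γ → γ / 2 ≤ x →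
      phiGamma γ x = -(8 / (1 - γ) ^ 2) *
        ((1 - x) * Real.log (1 - x) - x * Real.log (2 * x / γ) + x
          + x ^ 2 / (2 * γ) - γ / 4)) := by
  have formula := phiGamma_eq_integral_posPart hγ hx
  obtain ⟨hγ₀, hγ₁⟩ := hγ
  obtain ⟨hx₀, hx₁⟩ := hx
  have below {s : ℝ} (hs : s ≤ γ) : ∫ w in γ..1, (s - w)⁺ ^ 2 / w ^ 2 = 0 :=
    integral_sq_posPart_sub_div_sq_eq_zero hs (hs.trans hγ₁.le)
  have above {s : ℝ} (hs : γ ≤ s ∧ s ≤ 1) := integral_sq_posPart_sub_div_sq hγ₀ hs.1 hs.2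
  refine ⟨fun hγx ↦ ?_, fun h1x hx2 ↦ ?_, fun h1x hx2 ↦ ?_, fun hxγ hx1 hx2 ↦ ?_,
    fun hxγ hx1 hx2 ↦ ?_⟩ <;> rw [formula]
  · rw [above (s := 2 * x) (by grind), above (s := x) (by grind), above (s := 1 - x) (by grind),
      log_mul two_ne_zero (by linarith)]
    field_simp; ring
  · rw [below (s := 2 * x) (by linarith), below (s := x) (by linarith),
      below (s := 1 - x) (by linarith)]
    ring
  · rw [above (s := 2 * x) (by grind), below (s := x) (by linarith),
      below (s := 1 - x) (by linarith)]
    field_simp; ring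
  · rw [below (s := 2 * x) (by linarith), below (s := x) hxγ, above (s := 1 - x) (by grind)]
    field_simp; ring
  · rw [above (s := 2 * x) (by grind), below (s := x) hxγ, above (s := 1 - x) (by grind),
      log_div (by linarith) hγ₀.ne']
    field_simp; ring
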